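/- arXiv:1502.06888 — 3 statements merged into one kernel-verified Lean document; each statement's English description precedes it below -/
import Mathlib

section
/- For all integers n ≥ k ≥ 3, the minimum number of orientations of the edges of K_n forming a weakly k-cycling family equals ⌈log₂((n-1)/(k-2))⌉; that is, w(n,k) = ⌈log₂((n-1)/(k-2))⌉. -/
/-!
The set of sizes of weakly `k`-cycling families turns out to be `{t | n - 1 ≤ (k - 2) * 2 ^ t}`.

*Lower bound* (`card_le_of_weakCycling`).  Fix a vertex `v`.  Given `t` tournaments, colour every
other vertex `x` by the set of tournaments in which `v → x`.  If `n - 1 > (k - 2) * 2 ^ t`, some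
colour class has at least `k - 1` elements; together with `v` these contain a `k`-set in which `v`
is a source or a sink of every tournament, so no tournament has a Hamiltonian cycle on it.

*Upper bound* (`exists_hamiltonian_cycle`).  Put `m = k - 2`.  For `j < t` let the `j`-th
tournament on `{0, …, 2 ^ t * m}` have `x → y`, for `x < y`, iff the `j`-th binary digit of
`⌊(y - x - 1) / m⌋` is `0`.  All of them are invariant under rotation modulo `2 ^ t * m + 1`.
The tournament of the top digit is the circular one, in which every vertex beats the
`2 ^ (t - 1) * m` vertices that follow it.  So the circular ordering of a set `W` is a Hamiltonian
cycle of it, unless `W` lies in an arc of `2 ^ (t - 1) * m + 1` consecutive vertices.  In that case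
a rotation moves `W` into `{0, …, 2 ^ (t - 1) * m}`, where the lower digits take over by induction.
For `t = 0` nothing is left: `m + 2` elements do not fit into `{0, …, m}`.
-/

/-- The cyclic successor of an index in `Fin k`. -/
def cyc {k : ℕ} (i : Fin k) : Fin k := ⟨(i.val + 1) % k, Nat.mod_lt _ i.pos⟩

/-- An orientation of the edges of the complete graph on `Fin n`:
for all distinct `i, j` exactly one of `O i j`, `O j i` holds. -/
def IsTournament {n : ℕ} (O : Fin n → Fin n → Prop) : Prop :=
  ∀ i j : Fin n, i ≠ j → Xor' (O i j) (O j i)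

/-- `O` orients the cycle `u 0, u 1, ..., u (k-1), u 0` cyclically. -/
def OrientsCyclically {n k : ℕ} (O : Fin n → Fin n → Prop) (u : Fin k → Fin n) : Prop :=
  ∀ i : Fin k, O (u i) (u (cyc i))

/-- A family of orientations of `K_n` is weakly `k`-cycling if for every `k`-element
subset of the vertex set some member orients some ordering of that subset cyclically. -/
def WeakCycling (n k t : ℕ) (F : Fin t → (Fin n → Fin n → Prop)) : Prop :=
  (∀ s, IsTournament (F s)) ∧
    ∀ w : Finset (Fin n), w.card = k →
      ∃ s, ∃ v : Fin k → Fin n, Function.Injective v ∧ (∀ i, v i ∈ w) ∧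
        OrientsCyclically (F s) v

/-- `w(n,k)`, the minimum size of a weakly `k`-cycling family of orientations of `K_n`. -/
noncomputable def wnk (n k : ℕ) : ℕ :=
  sInf {t : ℕ | ∃ F : Fin t → (Fin n → Fin n → Prop), WeakCycling n k t F}

/-! ### Lower bound -/

/-- The colour-class argument: with too few tournaments some `k`-set has a vertex that is a source
or a sink in each of them. -/
lemma card_le_of_weakCycling {n k t : ℕ} (hk : 3 ≤ k) (hn : k ≤ n)
    (F : Fin t → (Fin n → Fin n → Prop)) (hF : WeakCycling n k t F) :
    n - 1 ≤ (k - 2) * 2 ^ t := by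
  classical
  by_contra! hlt
  obtain ⟨hT, hC⟩ := hF
  let v : Fin n := ⟨0, by omega⟩
  let c : Fin n → (Fin t → Bool) := fun x s => decide (F s v x)
  obtain ⟨σ, -, hσ⟩ := Finset.exists_lt_card_fiber_of_mul_lt_card_of_maps_to
    (s := Finset.univ.erase v) (t := (Finset.univ : Finset (Fin t → Bool))) (f := c) (n := k - 2)
    (fun _ _ => Finset.mem_univ _) (by
      rw [Finset.card_erase_of_mem (Finset.mem_univ v)]
      simpa [mul_comm] using hlt)
  obtain ⟨S, hS, hScard⟩ := Finset.exists_subset_card_eq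
    (show k - 1 ≤ (Finset.univ.erase v |>.filter (c · = σ)).card by omega)
  have hSv : v ∉ S := fun h => by simpa using hS h
  have hw : (insert v S).card = k := by
    rw [Finset.card_insert_of_notMem hSv]; omega
  obtain ⟨s, u, hinj, hmem, hcyc⟩ := hC _ hw
  have himg : Finset.univ.image u = insert v S := by
    apply Finset.eq_of_subset_of_card_le
    · intro x hx
      obtain ⟨i, -, rfl⟩ := Finset.mem_image.1 hx
      exact hmem i
    · rw [Finset.card_image_of_injective _ hinj, hw]; simp
  obtain ⟨i, -, hi⟩ := Finset.mem_image.1 (himg ▸ Finset.mem_insert_self v S)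
  -- `j` is the cyclic predecessor of the position `i` of `v`
  obtain ⟨j, hj⟩ : ∃ j : Fin k, cyc j = i := by
    rcases Nat.eq_zero_or_pos i.val with h0 | hpos
    · refine ⟨⟨k - 1, by omega⟩, Fin.ext ?_⟩
      have : k - 1 + 1 = k := by omega
      simp [cyc, this, h0]
    · refine ⟨⟨i.val - 1, by omega⟩, Fin.ext ?_⟩
      have : i.val - 1 + 1 = i.val := by omega
      simp [cyc, this, Nat.mod_eq_of_lt i.2]
  have hne : ∀ a : Fin k, cyc a ≠ a := by
    intro a ha
    have h1 : (a.val + 1) % k = a.val := congrArg Fin.val ha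
    have h2 := a.2
    rcases Nat.lt_or_ge (a.val + 1) k with h | h
    · rw [Nat.mod_eq_of_lt h] at h1; omega
    · have : a.val + 1 = k := by omega
      rw [this, Nat.mod_self] at h1; omega
  have hmemS : ∀ a : Fin k, a ≠ i → u a ∈ S := fun a ha =>
    (Finset.mem_insert.1 (hmem a)).resolve_left fun h => ha (hinj (h.trans hi.symm))
  have hcol : ∀ x ∈ S, c x = σ := fun x hx => (Finset.mem_filter.1 (hS hx)).2
  have hji : j ≠ i := fun h => hne j (hj.trans h.symm)
  have h1 : F s v (u (cyc i)) := hi ▸ hcyc i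
  have h2 : F s (u j) v := by have := hcyc j; rwa [hj, hi] at this
  have h3 : c (u (cyc i)) s = c (u j) s := by
    rw [hcol _ (hmemS _ (hne i)), hcol _ (hmemS _ hji)]
  have h4 : F s v (u j) := by
    have : decide (F s v (u (cyc i))) = decide (F s v (u j)) := h3
    rw [decide_eq_decide] at this
    exact this.1 h1
  have h5 : u j ≠ v := fun h => hji (hinj (h.trans hi.symm))
  rcases hT s _ _ h5 with h | h
  · exact h.2 h4
  · exact h.2 h2

/-! ### The digit tournaments -/

/-- The tournament on `ℕ` in which, for `x < y`, the edge goes from `x` to `y` iff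
`⌊(y - x - 1) / q⌋` is even.  For `q = 2 ^ j * m` this parity is the `j`-th binary digit of
`⌊(y - x - 1) / m⌋`. -/
def digitArc (q x y : ℕ) : Prop :=
  (x < y ∧ (y - x - 1) / q % 2 = 0) ∨ (y < x ∧ (x - y - 1) / q % 2 = 1)

lemma digitArc_xor (q x y : ℕ) (h : x ≠ y) : Xor (digitArc q x y) (digitArc q y x) := by
  have : (digitArc q x y ∧ ¬ digitArc q y x) ∨ (digitArc q y x ∧ ¬ digitArc q x y) := by
    unfold digitArc
    rcases Nat.lt_or_gt_of_ne h with h | h <;> omega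
  exact this

/-- Rotation of `{0, …, 2 * Q}`, modulo `2 * Q + 1`, moving `a` to `0`. -/
def rot (Q a x : ℕ) : ℕ := if a ≤ x then x - a else x + (2 * Q + 1) - a

/-- Reflecting a difference `e` to `2 * Q + 1 - e` flips the digit. -/
lemma digit_reflect {q Q e : ℕ} (hq : 0 < q) (hQ : q ∣ Q) (h1 : 1 ≤ e) (h2 : e ≤ 2 * Q) :
    (2 * Q + 1 - e - 1) / q % 2 = 1 - (e - 1) / q % 2 := by
  obtain ⟨r, rfl⟩ := hQ
  obtain ⟨d, rfl⟩ : ∃ d, e = d + 1 := ⟨e - 1, by omega⟩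
  have h3 := Nat.mul_sub_div d q (2 * r) (by rw [Nat.mul_left_comm]; omega)
  have h4 : d / q < 2 * r := by
    rw [Nat.div_lt_iff_lt_mul hq, mul_assoc, mul_comm r q]; omega
  have h5 : 2 * (q * r) + 1 - (d + 1) - 1 = q * (2 * r) - (d + 1) := by
    rw [Nat.mul_left_comm]; omega
  rw [h5, h3]
  simp only [Nat.add_sub_cancel]
  omega

lemma digitArc_rot {q Q a x y : ℕ} (hq : 0 < q) (hQ : q ∣ Q)
    (ha : a ≤ 2 * Q) (hx : x ≤ 2 * Q) (hy : y ≤ 2 * Q) (h : digitArc q (rot Q a x) (rot Q a y)) :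
    digitArc q x y := by
  unfold digitArc rot at *
  split_ifs at h with h1 h2 h2
  · rwa [show x - a < y - a ↔ x < y by omega, show y - a < x - a ↔ y < x by omega,
      show y - a - (x - a) = y - x by omega, show x - a - (y - a) = x - y by omega] at h
  · have := digit_reflect (e := x - y) hq hQ (by omega) (by omega)
    rw [show y + (2 * Q + 1) - a - (x - a) = 2 * Q + 1 - (x - y) by omega] at h
    omega
  · have := digit_reflect (e := y - x) hq hQ (by omega) (by omega)
    rw [show x + (2 * Q + 1) - a - (y - a) = 2 * Q + 1 - (y - x) by omega] at h
    omega
  · rwa [show x + (2 * Q + 1) - a < y + (2 * Q + 1) - a ↔ x < y by omega,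
      show y + (2 * Q + 1) - a < x + (2 * Q + 1) - a ↔ y < x by omega,
      show y + (2 * Q + 1) - a - (x + (2 * Q + 1) - a) = y - x by omega,
      show x + (2 * Q + 1) - a - (y + (2 * Q + 1) - a) = x - y by omega] at h

/-- In the circular tournament `digitArc Q` on `{0, …, 2 * Q}`, a set is traversed cyclically in
its natural order, unless it lies in an arc of `Q + 1` consecutive vertices. -/
lemma sorted_cycle_or_arc {Q k : ℕ} (hQ : 0 < Q) (W : Finset ℕ)
    (hW : ∀ x ∈ W, x ≤ 2 * Q) (hc : W.card = k) :
    (∃ v : Fin k → ℕ, Function.Injective v ∧ (∀ i, v i ∈ W) ∧ ∀ i, digitArc Q (v i) (v (cyc i))) ∨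
      ∃ a ∈ W, ∀ x ∈ W, rot Q a x ≤ Q := by
  by_cases harc : ∃ a ∈ W, ∀ x ∈ W, rot Q a x ≤ Q
  · exact Or.inr harc
  left
  push Not at harc
  let v := W.orderEmbOfFin hc
  have hvW : ∀ i, v i ∈ W := fun i => Finset.orderEmbOfFin_mem W hc i
  have hsurj : ∀ x ∈ W, ∃ i, v i = x := by
    intro x hx
    have : x ∈ Set.range v := by rw [Finset.range_orderEmbOfFin]; exact hx
    exact this
  refine ⟨v, v.injective, hvW, fun i => ?_⟩
  rcases Nat.lt_or_ge (i.val + 1) k with h | h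
  · have hval : (cyc i).val = i.val + 1 := Nat.mod_eq_of_lt h
    have hlt : v i < v (cyc i) := v.strictMono (Fin.lt_def.2 (by omega))
    -- a gap longer than `Q` after `v i` would make `v (cyc i)` the start of a short arc
    have hgap : v (cyc i) - v i ≤ Q := by
      by_contra! hbig
      obtain ⟨x, hx, hxQ⟩ := harc _ (hvW (cyc i))
      obtain ⟨l, rfl⟩ := hsurj x hx
      have h1 := hW _ (hvW l)
      unfold rot at hxQ
      split_ifs at hxQ with h2
      · omega
      · have h3 : l < cyc i := v.lt_iff_lt.1 (not_le.1 h2)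
        have h4 : v l ≤ v i := v.monotone (Fin.le_def.2 (by have := Fin.lt_def.1 h3; omega))
        omega
    exact Or.inl ⟨hlt, by rw [Nat.div_eq_of_lt (by omega)]⟩
  · have hik : i.val + 1 = k := by omega
    have hval : (cyc i).val = 0 := by simp [cyc, hik]
    have hmin : ∀ l, v (cyc i) ≤ v l := fun l => v.monotone (Fin.le_def.2 (by omega))
    have hmax : ∀ l, v l ≤ v i := fun l => v.monotone (Fin.le_def.2 (by omega))
    obtain ⟨x, hx, hxQ⟩ := harc _ (hvW (cyc i))
    obtain ⟨l, rfl⟩ := hsurj x hx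
    rw [rot, if_pos (hmin l)] at hxQ
    have h1 := hmax l
    have h2 := hW _ (hvW i)
    refine Or.inr ⟨by omega, ?_⟩
    rw [Nat.div_eq_of_lt_le (k := 1) (by omega) (by omega)]

/-! ### Upper bound -/

lemma exists_hamiltonian_cycle {m : ℕ} (hm : 0 < m) (t : ℕ) :
    ∀ W : Finset ℕ, (∀ x ∈ W, x ≤ 2 ^ t * m) → W.card = m + 2 →
      ∃ j < t, ∃ v : Fin (m + 2) → ℕ, Function.Injective v ∧ (∀ i, v i ∈ W) ∧
        ∀ i, digitArc (2 ^ j * m) (v i) (v (cyc i)) := by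
  induction t with
  | zero =>
    intro W hW hc
    have : W ⊆ Finset.range (m + 1) := fun x hx => by
      have := hW x hx
      simp only [pow_zero, one_mul] at this
      exact Finset.mem_range.2 (by omega)
    have := Finset.card_le_card this
    rw [Finset.card_range] at this
    omega
  | succ t ih =>
    intro W hW hc
    have hW' : ∀ x ∈ W, x ≤ 2 * (2 ^ t * m) := fun x hx => by
      have := hW x hx
      rwa [pow_succ', mul_assoc] at this
    rcases sorted_cycle_or_arc (by positivity) W hW' hc with ⟨v, hv⟩ | ⟨a, ha, harc⟩
    · exact ⟨t, by omega, v, hv⟩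
    · have hinj : Set.InjOn (rot (2 ^ t * m) a) W := by
        intro x hx y hy hxy
        have := hW' x hx
        have := hW' y hy
        have := hW' a ha
        unfold rot at hxy
        split_ifs at hxy <;> omega
      obtain ⟨j, hj, v, hvinj, hvmem, hvcyc⟩ := ih (W.image (rot (2 ^ t * m) a))
        (fun x hx => by
          obtain ⟨y, hy, rfl⟩ := Finset.mem_image.1 hx
          exact harc y hy)
        (by rw [Finset.card_image_of_injOn hinj, hc])
      choose u huW hu using fun i => Finset.mem_image.1 (hvmem i)
      refine ⟨j, by omega, u, fun i l hil => hvinj ?_, huW, fun i => ?_⟩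
      · rw [← hu i, ← hu l, hil]
      · refine digitArc_rot (by positivity) (Nat.mul_dvd_mul_right (pow_dvd_pow 2 hj.le) m)
          (hW' a ha) (hW' _ (huW _)) (hW' _ (huW _)) ?_
        rw [hu, hu]
        exact hvcyc i

lemma exists_weakCycling {n k t : ℕ} (hk : 3 ≤ k) (h : n - 1 ≤ (k - 2) * 2 ^ t) :
    ∃ F : Fin t → (Fin n → Fin n → Prop), WeakCycling n k t F := by
  obtain ⟨m, rfl⟩ : ∃ m, k = m + 2 := ⟨k - 2, by omega⟩
  refine ⟨fun j x y => digitArc (2 ^ j.val * m) x.val y.val,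
    fun j x y hxy => digitArc_xor _ _ _ (Fin.val_ne_of_ne hxy), fun w hw => ?_⟩
  obtain ⟨j, hj, v, hinj, hmem, hcyc⟩ := exists_hamiltonian_cycle (m := m) (by omega) t
    (w.map Fin.valEmbedding)
    (fun x hx => by
      obtain ⟨y, -, rfl⟩ := Finset.mem_map.1 hx
      have := y.2
      rw [Nat.add_sub_cancel, mul_comm] at h
      simp only [Fin.valEmbedding_apply]
      omega)
    (by rw [Finset.card_map, hw])
  choose u huw hu using fun i => Finset.mem_map.1 (hmem i)
  refine ⟨⟨j, hj⟩, u, fun i l hil => hinj ?_, huw, fun i => ?_⟩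
  · rw [← hu i, ← hu l, hil]
  · have := hcyc i
    rwa [← hu i, ← hu (cyc i)] at this

/-! ### The formula -/

/-- For all `n ≥ k ≥ 3`, `w(n,k) = ⌈log₂((n-1)/(k-2))⌉`. -/
theorem wnk_eq (n k : ℕ) (hk : 3 ≤ k) (hn : k ≤ n) :
    (wnk n k : ℤ) = ⌈Real.logb 2 (((n : ℝ) - 1) / ((k : ℝ) - 2))⌉ := by
  have hk' : (3 : ℝ) ≤ k := by exact_mod_cast hk
  have hn' : (k : ℝ) ≤ n := by exact_mod_cast hn
  have hpos : (0 : ℝ) < (k : ℝ) - 2 := by linarith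
  have hone : 1 ≤ ((n : ℝ) - 1) / ((k : ℝ) - 2) := by
    rw [le_div_iff₀ hpos]; linarith
  obtain ⟨c, hc⟩ := Int.eq_ofNat_of_zero_le
    (Int.ceil_nonneg (Real.logb_nonneg (b := 2) (by norm_num) hone))
  rw [hc]
  have hiff : ∀ t : ℕ, n - 1 ≤ (k - 2) * 2 ^ t ↔ c ≤ t := by
    intro t
    have h1 : c ≤ t ↔ ⌈Real.logb 2 (((n : ℝ) - 1) / ((k : ℝ) - 2))⌉ ≤ (t : ℤ) := by
      rw [hc]; exact Nat.cast_le.symm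
    rw [h1, Int.ceil_le, Int.cast_natCast, Real.logb_le_iff_le_rpow (by norm_num) (by linarith),
      Real.rpow_natCast, div_le_iff₀ hpos, ← Nat.cast_le (α := ℝ)]
    push_cast [Nat.cast_sub (show 1 ≤ n by omega), Nat.cast_sub (show 2 ≤ k by omega)]
    rw [mul_comm]
  have hset : {t : ℕ | ∃ F : Fin t → (Fin n → Fin n → Prop), WeakCycling n k t F} = Set.Ici c := by
    ext t
    rw [Set.mem_ofPred_eq, Set.mem_Ici, ← hiff]
    exact ⟨fun ⟨F, hF⟩ => card_le_of_weakCycling hk hn F hF, exists_weakCycling hk⟩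
  rw [wnk, hset, csInf_Ici]
end

section
/- For every integer n ≥ 3, the minimum number of orientations of the edges of K_n such that every triangle (every 3-element vertex set) is cyclically oriented in at least one orientation of the family equals ⌈log₂(n-1)⌉. -/
/-- A family of orientations of `K_n` makes every triangle cyclic if for each
three distinct vertices some member orients the triangle on them cyclically. -/
def TriangleCycling (n t : ℕ) (F : Fin t → (Fin n → Fin n → Prop)) : Prop :=
  (∀ s, IsTournament (F s)) ∧
    ∀ a b c : Fin n, a ≠ b → a ≠ c → b ≠ c →
      ∃ s, (F s a b ∧ F s b c ∧ F s c a) ∨ (F s a c ∧ F s c b ∧ F s b a)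

/-- Some binary digit below position `t` is common to `p` and `q` but is not the digit of
`p + q + 1`; this is what makes triangles cyclic in `bitOrientation`. -/
lemma exists_testBit_ne (t : ℕ) : ∀ p q : ℕ, p + q + 1 < 2 ^ t →
    ∃ s < t, p.testBit s = q.testBit s ∧ (p + q + 1).testBit s = !(p.testBit s) := by
  induction t with
  | zero => intro p q h; simp at h
  | succ t ih =>
    intro p q h
    by_cases h0 : p % 2 = 0 ∧ q % 2 = 0
    · refine ⟨0, Nat.succ_pos t, ?_⟩
      have h1 : (p + q + 1) % 2 = 1 := by omega
      simp [Nat.testBit_zero, h0.1, h0.2, h1]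
    · -- The carry out of the lowest digit is again `1`, so halving preserves the situation.
      have hdiv : (p + q + 1) / 2 = p / 2 + q / 2 + 1 := by omega
      obtain ⟨s, hs, h1, h2⟩ := ih (p / 2) (q / 2) (by rw [pow_succ] at h; omega)
      refine ⟨s + 1, by omega, ?_⟩
      simp only [Nat.testBit_succ, hdiv]
      exact ⟨h1, h2⟩

/-- The orientation directing an edge `ij` with `i < j` from `i` to `j` iff the `s`-th binary digit
of `j - i - 1` is `1`. -/
def bitOrientation (n s : ℕ) (i j : Fin n) : Prop :=
  if i < j then (j.val - i.val - 1).testBit s = true else (i.val - j.val - 1).testBit s = false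

lemma isTournament_bitOrientation (n s : ℕ) : IsTournament (bitOrientation n s) := by
  intro i j hij
  refine xor_def.2 ?_
  rcases lt_or_gt_of_ne hij with h | h
  · cases hb : (j.val - i.val - 1).testBit s <;>
      simp [bitOrientation, h, not_lt.2 h.le, hb]
  · cases hb : (i.val - j.val - 1).testBit s <;>
      simp [bitOrientation, h, not_lt.2 h.le, hb]

lemma bitOrientation_cyclic_of_lt {n t : ℕ} (hn : n ≤ 2 ^ t + 1) {i j k : Fin n}
    (hij : i < j) (hjk : j < k) :
    ∃ s : Fin t,
      (bitOrientation n s i j ∧ bitOrientation n s j k ∧ bitOrientation n s k i) ∨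
      (bitOrientation n s i k ∧ bitOrientation n s k j ∧ bitOrientation n s j i) := by
  have hik := hij.trans hjk
  have h1 : i.val < j.val := hij
  have h2 : j.val < k.val := hjk
  have h3 := k.isLt
  have hsum : k.val - i.val - 1 = (j.val - i.val - 1) + (k.val - j.val - 1) + 1 := by omega
  obtain ⟨s, hs, hpq, hr⟩ := exists_testBit_ne t (j.val - i.val - 1) (k.val - j.val - 1) (by omega)
  rw [← hsum] at hr
  refine ⟨⟨s, hs⟩, ?_⟩
  simp only [bitOrientation, hij, hjk, hik, not_lt.2 hij.le, not_lt.2 hjk.le, not_lt.2 hik.le,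
    if_true, if_false, hr, ← hpq]
  cases (j.val - i.val - 1).testBit s <;> simp

lemma triangleCycling_bitOrientation {n t : ℕ} (hn : n ≤ 2 ^ t + 1) :
    TriangleCycling n t (fun s => bitOrientation n s) := by
  refine ⟨fun s => isTournament_bitOrientation n s, fun a b c hab hac hbc => ?_⟩
  rcases lt_or_gt_of_ne hab with h1 | h1 <;> rcases lt_or_gt_of_ne hac with h2 | h2 <;>
    rcases lt_or_gt_of_ne hbc with h3 | h3
  · obtain ⟨s, h⟩ := bitOrientation_cyclic_of_lt hn h1 h3; exact ⟨s, by tauto⟩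
  · obtain ⟨s, h⟩ := bitOrientation_cyclic_of_lt hn h2 h3; exact ⟨s, by tauto⟩
  · exact absurd (h1.trans h3) (not_lt.2 h2.le)
  · obtain ⟨s, h⟩ := bitOrientation_cyclic_of_lt hn h2 h1; exact ⟨s, by tauto⟩
  · obtain ⟨s, h⟩ := bitOrientation_cyclic_of_lt hn h1 h2; exact ⟨s, by tauto⟩
  · exact absurd (h3.trans h1) (not_lt.2 h2.le)
  · obtain ⟨s, h⟩ := bitOrientation_cyclic_of_lt hn h3 h2; exact ⟨s, by tauto⟩
  · obtain ⟨s, h⟩ := bitOrientation_cyclic_of_lt hn h3 h1; exact ⟨s, by tauto⟩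

lemma TriangleCycling.le_two_pow {n t : ℕ} {F : Fin t → Fin n → Fin n → Prop}
    (hF : TriangleCycling n t F) (hn : 0 < n) : n - 1 ≤ 2 ^ t := by
  classical
  let z : Fin n := ⟨0, hn⟩
  let f : {v : Fin n // v ≠ z} → Finset (Fin t) := fun v => Finset.univ.filter fun s => F s z v
  have hf : Function.Injective f := by
    rintro ⟨v, hv⟩ ⟨w, hw⟩ hvw
    by_contra hne
    have hne' : v ≠ w := fun h => hne (Subtype.ext h)
    obtain ⟨s, hs⟩ := hF.2 z v w hv.symm hw.symm hne'
    have hiff : F s z v ↔ F s z w := by simpa [f] using Finset.ext_iff.1 hvw s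
    have h1 := xor_def.1 (hF.1 s z v hv.symm)
    have h2 := xor_def.1 (hF.1 s z w hw.symm)
    tauto
  simpa [Fintype.card_subtype_compl] using Fintype.card_le_of_injective f hf

/-- For every `n ≥ 3`, the minimum number of orientations of `K_n` such that every
triangle is cyclically oriented in at least one of them equals `⌈log₂(n-1)⌉`. -/
theorem triangle_cycling_min (n : ℕ) (hn : 3 ≤ n) :
    ((sInf {t : ℕ | ∃ F : Fin t → (Fin n → Fin n → Prop), TriangleCycling n t F} : ℕ) : ℤ) =
      ⌈Real.logb 2 ((n : ℝ) - 1)⌉ := by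
  have hset : {t : ℕ | ∃ F : Fin t → (Fin n → Fin n → Prop), TriangleCycling n t F} =
      Set.Ici (Nat.clog 2 (n - 1)) := by
    ext t
    rw [Set.mem_ofPred_eq, Set.mem_Ici, Nat.clog_le_iff_le_pow (by norm_num)]
    constructor
    · rintro ⟨F, hF⟩
      exact hF.le_two_pow (by omega)
    · intro h
      exact ⟨_, triangleCycling_bitOrientation (n := n) (t := t) (by omega)⟩
  have hcast : (n : ℝ) - 1 = ((n - 1 : ℕ) : ℝ) := by
    rw [Nat.cast_sub (by omega), Nat.cast_one]
  have hceil := Real.ceil_logb_natCast (b := 2) (r := ((n - 1 : ℕ) : ℝ)) (Nat.cast_nonneg _)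
  rw [Int.clog_natCast] at hceil
  rw [hset, csInf_Ici, hcast, ← hceil]
  norm_num
end

section
/- Let n ≥ k ≥ 3 and suppose O_1,...,O_t is a weakly k-cycling family of orientations of K_n. Then for every vertex u and every function σ from {1,...,t} to {0,1}, the number of vertices v ≠ u such that for each i ∈ {1,...,t} the edge uv is oriented from u to v in O_i exactly when σ(i) = 0 is at most k-2. Consequently n-1 ≤ (k-2)·2^t. -/
theorem exists_cyc_eq {k : ℕ} (i : Fin k) : ∃ j : Fin k, cyc j = i := by
  obtain ⟨i, hi⟩ := i
  rcases Nat.eq_zero_or_pos i with rfl | hpos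
  · refine ⟨⟨k - 1, by omega⟩, Fin.ext ?_⟩
    simp [cyc, Nat.sub_add_cancel hi]
  · refine ⟨⟨i - 1, by omega⟩, Fin.ext ?_⟩
    simp [cyc, Nat.sub_add_cancel hpos, Nat.mod_eq_of_lt hi]

theorem cyc_ne {k : ℕ} (hk : 2 ≤ k) (i : Fin k) : cyc i ≠ i := by
  intro h
  have h' : (i.val + 1) % k = i.val := congrArg Fin.val h
  have hi := i.isLt
  rcases Nat.lt_or_ge (i.val + 1) k with hlt | hge
  · rw [Nat.mod_eq_of_lt hlt] at h'
    omega
  · have he : i.val + 1 = k := by omega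
    rw [he, Nat.mod_self] at h'
    omega

/-- `k - 1` vertices with the same pattern towards `u` would make `u` a source or a sink of a `k`-set
in each orientation, whereas a cycle through `u` both leaves and enters it. -/
theorem class_ncard_le (n k t : ℕ) (hk : 3 ≤ k)
    (F : Fin t → (Fin n → Fin n → Prop)) (hF : WeakCycling n k t F)
    (u : Fin n) (σ : Fin t → Bool) :
    {v : Fin n | v ≠ u ∧ ∀ i : Fin t, (F i u v ↔ σ i = false)}.ncard ≤ k - 2 := by
  classical
  by_contra! hlt
  rw [Set.ncard_eq_toFinset_card'] at hlt
  have hge := Nat.succ_le_of_lt hlt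
  obtain ⟨T, hTsub, hTcard⟩ := Finset.exists_subset_card_eq hge
  have hT : ∀ v ∈ T, v ≠ u ∧ ∀ i : Fin t, (F i u v ↔ σ i = false) := fun v hv => by
    simpa using hTsub hv
  have hu : u ∉ T := fun h => (hT u h).1 rfl
  have hw : (insert u T).card = k := by
    rw [Finset.card_insert_of_notMem hu]
    omega
  obtain ⟨s, v, hinj, hmem, hcyc⟩ := hF.2 _ hw
  -- `v` enumerates the whole `k`-set, so the cycle passes through `u`
  have himg : Finset.univ.image v = insert u T := by
    apply Finset.eq_of_subset_of_card_le
    · intro x hx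
      obtain ⟨i, -, rfl⟩ := Finset.mem_image.1 hx
      exact hmem i
    · rw [hw, Finset.card_image_of_injective _ hinj, Finset.card_univ, Fintype.card_fin]
  obtain ⟨i, -, hi⟩ := Finset.mem_image.1 (himg ▸ Finset.mem_insert_self u T)
  have hmemT : ∀ m, m ≠ i → v m ∈ T := fun m hm =>
    (Finset.mem_insert.1 (hmem m)).resolve_left fun h => hm (hinj (h.trans hi.symm))
  obtain ⟨j, hj⟩ := exists_cyc_eq i
  have hji : j ≠ i := fun h => cyc_ne (by omega) j (hj.trans h.symm)
  have hout := hcyc i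
  have hin := hcyc j
  rw [hi] at hout
  rw [hj, hi] at hin
  have hσ := ((hT _ (hmemT _ (cyc_ne (by omega) i))).2 s).1 hout
  have hback := ((hT _ (hmemT j hji)).2 s).2 hσ
  rcases hF.1 s u (v j) (hT _ (hmemT j hji)).1.symm with h | h
  · exact h.2 hin
  · exact h.2 hback

/-- If `O_1, …, O_t` is a weakly `k`-cycling family of orientations of `K_n` (`n ≥ k ≥ 3`),
then for every vertex `u` and every `σ : Fin t → Bool`, at most `k - 2` vertices `v ≠ u`
have the edge `uv` oriented from `u` to `v` in `O_i` exactly when `σ i = false`;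
consequently `n - 1 ≤ (k - 2) * 2 ^ t`. -/
theorem weak_cycling_local_count (n k t : ℕ) (hk : 3 ≤ k) (hn : k ≤ n)
    (F : Fin t → (Fin n → Fin n → Prop)) (hF : WeakCycling n k t F) :
    (∀ u : Fin n, ∀ σ : Fin t → Bool,
        {v : Fin n | v ≠ u ∧ ∀ i : Fin t, (F i u v ↔ σ i = false)}.ncard ≤ k - 2) ∧
      n - 1 ≤ (k - 2) * 2 ^ t := by
  classical
  have hloc := class_ncard_le n k t hk F hF
  refine ⟨hloc, ?_⟩
  let u : Fin n := ⟨0, by omega⟩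
  let pat : Fin n → Fin t → Bool := fun v i => !decide (F i u v)
  have hcount := Finset.card_le_mul_card_image_of_maps_to
    (s := Finset.univ.erase u) (t := (Finset.univ : Finset (Fin t → Bool))) (f := pat)
    (fun _ _ => Finset.mem_univ _) (k - 2) (fun σ _ => by
      refine le_trans (le_of_eq ?_) (hloc u σ)
      rw [← Set.ncard_coe_finset]
      congr 1
      ext v
      simp only [Finset.coe_filter, Finset.mem_erase, Finset.mem_univ, and_true,
        Set.mem_ofPred_eq, funext_iff, pat]
      refine and_congr_right fun _ => forall_congr' fun i => ?_
      by_cases h : F i u v <;> cases σ i <;> simp [h])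
  simpa [Finset.card_erase_of_mem] using hcount
end
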